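/- Let A ∈ ℝ^{n×n}, B ∈ ℝ^{n×m}, C ∈ ℝ^{p×n}, μ := (p+m)·n, let F ∈ ℝ^{n×n} be Hurwitz, L ∈ ℝ^{n×p}, and T ∈ ℝ^{n×n} invertible with F·T = T·(A − L·C). Define θ := [vec(T·L); vec(T·B)], Π := θ^⊤ ⊗ T^{−1}, F_ξ := I_μ ⊗ F, B_ξ := [0_{pn²×m}; I_m ⊗ vec(I_n)], L_ξ := [I_p ⊗ vec(I_n); 0_{mn²×p}], C_ξ := C·Π, A_ξ := F_ξ + L_ξ·C_ξ. Let Λ ∈ ℝ^{n×n} be Hurwitz, Γ ∈ ℝ^{n×n} arbitrary, and set A_e := [[Λ, 0], [L_ξ·C·T^{−1}·Γ, A_ξ]] ∈ ℝ^{(n+nμ)×(n+nμ)}, B_e := [0_{n×m}; B_ξ]. Let K_e ∈ ℝ^{m×(n+nμ)} be such that A_e + B_e·K_e is Hurwitz. Consider the closed loop: x : ℝ → ℝ^n differentiable with x'(t) = A·x(t) + B·u(t), y(t) = C·x(t), M : ℝ → ℝ^{n×μ} differentiable with M'(t) = F·M(t) + [y(t)^⊤ ⊗ I_n , u(t)^⊤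 ⊗ I_n], and u(t) := K_e·[0_n; vec(M(t))]. Then the origin (x, M) = 0 is globally exponentially stable: there exist c > 0 and λ > 0 such that for all initial conditions x(0) ∈ ℝ^n, M(0) ∈ ℝ^{n×μ} and all t ≥ 0, ‖x(t)‖ + ‖M(t)‖_F ≤ c·e^{−λ·t}·(‖x(0)‖ + ‖M(0)‖_F). -/

import Mathlib

open Matrix Filter
open scoped Kronecker

/-- Column-stacking vectorization `vec X : (col, row) ↦ X row col`
(`vec X` stacks the columns of `X` one below another). -/
def mvec {l : ℕ} {K : Type*} (X : Matrix (Fin l) K ℝ) : K × Fin l → ℝ :=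
  fun q => X q.2 q.1

/-- The Kronecker product `θᵀ ⊗ S` of a row vector `θᵀ` with a square matrix `S`,
with the trivial row index of `θᵀ` flattened away. -/
def rowKron {n : ℕ} {K : Type*} (θ : K → ℝ) (S : Matrix (Fin n) (Fin n) ℝ) :
    Matrix (Fin n) (K × Fin n) ℝ :=
  ((Matrix.of fun (_ : Fin 1) j => θ j) ⊗ₖ S).submatrix (fun i => ((0 : Fin 1), i)) id

/-- Column index set of the Kreisselmeier filter state `M ∈ ℝ^{n × (p+m)n}`. -/
abbrev Kix (n m p : ℕ) := (Fin p × Fin n) ⊕ (Fin m × Fin n)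

/-- The regressor `[yᵀ ⊗ Iₙ , uᵀ ⊗ Iₙ] ∈ ℝ^{n × (p+m)n}` (horizontal concatenation). -/
def regressor {m p : ℕ} (n : ℕ) (y : Fin p → ℝ) (u : Fin m → ℝ) :
    Matrix (Fin n) (Kix n m p) ℝ :=
  Matrix.fromCols (rowKron y (1 : Matrix (Fin n) (Fin n) ℝ))
    (rowKron u (1 : Matrix (Fin n) (Fin n) ℝ))

/-- A real square matrix is Hurwitz if all of its eigenvalues over `ℂ`
have strictly negative real part. -/
def IsHurwitz {N : Type*} [Fintype N] [DecidableEq N] (A : Matrix N N ℝ) : Prop :=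
  ∀ z ∈ spectrum ℂ (A.map (Complex.ofReal : ℝ → ℂ)), z.re < 0

/-- PBH test for stabilizability: for every `λ ∈ ℂ` with `Re λ ≥ 0`,
`rank [λ·I − A₀ , B₀] = q` over `ℂ`. -/
def IsStabilizable {q m : Type*} [Fintype q] [DecidableEq q] [Fintype m]
    (A₀ : Matrix q q ℝ) (B₀ : Matrix q m ℝ) : Prop :=
  ∀ z : ℂ, 0 ≤ z.re →
    (Matrix.fromCols (z • (1 : Matrix q q ℂ) - A₀.map (Complex.ofReal : ℝ → ℂ))
      (B₀.map (Complex.ofReal : ℝ → ℂ))).rank = Fintype.card q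

/-- Euclidean norm of a vector. -/
noncomputable def euclNorm {ι : Type*} [Fintype ι] (v : ι → ℝ) : ℝ :=
  Real.sqrt (∑ i, v i ^ 2)

/-- Frobenius norm of a matrix. -/
noncomputable def frobNorm {ι K : Type*} [Fintype ι] [Fintype K] (X : Matrix ι K ℝ) : ℝ :=
  Real.sqrt (∑ i, ∑ j, X i j ^ 2)

/-- `F_ξ := I_μ ⊗ F`. -/
def Fxi {n m p : ℕ} (F : Matrix (Fin n) (Fin n) ℝ) :
    Matrix (Kix n m p × Fin n) (Kix n m p × Fin n) ℝ :=
  (1 : Matrix (Kix n m p) (Kix n m p) ℝ) ⊗ₖ F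

/-- `B_ξ := [0_{pn²×m} ; I_m ⊗ vec(I_n)]` (vertical concatenation), written entrywise
on the flattened row index `Kix n m p × Fin n`. -/
def Bxi (n m p : ℕ) : Matrix (Kix n m p × Fin n) (Fin m) ℝ :=
  Matrix.of fun q j =>
    Sum.elim (fun _ => (0 : ℝ))
      (fun ja => (1 : Matrix (Fin m) (Fin m) ℝ) ja.1 j *
        (1 : Matrix (Fin n) (Fin n) ℝ) ja.2 q.2) q.1

/-- `L_ξ := [I_p ⊗ vec(I_n) ; 0_{mn²×p}]` (vertical concatenation), written entrywise
on the flattened row index `Kix n m p × Fin n`. -/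
def Lxi (n m p : ℕ) : Matrix (Kix n m p × Fin n) (Fin p) ℝ :=
  Matrix.of fun q j =>
    Sum.elim (fun ya => (1 : Matrix (Fin p) (Fin p) ℝ) ya.1 j *
        (1 : Matrix (Fin n) (Fin n) ℝ) ya.2 q.2) (fun _ => (0 : ℝ)) q.1

/-!
Put `ξ = vec M`. The parameter `θ` is chosen so that the regressor driven by `(y, u)` maps it to
`T L y + T B u`; hence `Π ξ = T⁻¹ M θ` is a Luenberger observer of `x`, and the error `e = x - Π ξ`
obeys `e' = (A - L C) e`. In the coordinates `(e, ξ)` the closed loop is block triangular, with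
diagonal blocks `A - L C`, which is similar to `F`, and `A_ξ + B_ξ K`, which is a diagonal block of
`A_e + B_e K_e`; here `K` is the block of `K_e` that multiplies `ξ`. Both are Hurwitz.

Exponential decay for a Hurwitz matrix `H` needs no Jordan form: if `a` is a root of the
characteristic polynomial, then `(H - a) w` is again a solution, annihilated by a polynomial of
lower degree in `H`, and `w' = a w + (H - a) w` is a scalar equation with decaying forcing.
-/

section ExponentialDecay

variable {E : Type*} [NormedAddCommGroup E] [NormedSpace ℂ E]

lemma hasDerivAt_cexp_neg_mul_smul {a : ℂ} {w : ℝ → E} {g : E} {t : ℝ}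
    (hw : HasDerivAt w (a • w t + g) t) :
    HasDerivAt (fun s : ℝ => Complex.exp (-a * s) • w s) (Complex.exp (-a * t) • g) t := by
  have hexp : HasDerivAt (fun s : ℝ => Complex.exp (-a * s)) (Complex.exp (-a * t) * (-a * 1)) t :=
    (Complex.ofRealCLM.hasDerivAt.const_mul (-a)).cexp
  exact (hexp.smul hw).congr_deriv (by module)

lemma norm_cexp_neg_mul_ofReal (a : ℂ) (t : ℝ) :
    ‖Complex.exp (-a * t)‖ = Real.exp (-a.re * t) := by
  simp [Complex.norm_exp]

lemma norm_le_exp_of_hasDerivAt_smul_add {a : ℂ} {lam K : ℝ} (ha : a.re < -lam) {w g : ℝ → E}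
    (hw : ∀ t, 0 ≤ t → HasDerivAt w (a • w t + g t) t)
    (hg : ∀ t, 0 ≤ t → ‖g t‖ ≤ K * Real.exp (-lam * t)) {t : ℝ} (ht : 0 ≤ t) :
    ‖w t‖ ≤ (‖w 0‖ + K / (-lam - a.re)) * Real.exp (-lam * t) := by
  set δ := -lam - a.re
  have hδ : 0 < δ := sub_pos.2 ha
  set c := ‖w 0‖ + K / δ
  have hK : 0 ≤ K := by simpa using (norm_nonneg _).trans (hg 0 le_rfl)
  have hKc : K ≤ c * δ := by
    rw [add_mul, div_mul_cancel₀ _ hδ.ne']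
    exact le_add_of_nonneg_left (by positivity)
  have exp_mul_exp (s : ℝ) : Real.exp (-a.re * s) * Real.exp (-lam * s) = Real.exp (δ * s) := by
    rw [← Real.exp_add, show δ = -lam - a.re from rfl]
    ring_nf
  have fence : ‖Complex.exp (-a * t) • w t‖ ≤ c * Real.exp (δ * t) := by
    refine image_norm_le_of_norm_deriv_right_le_deriv_boundary (a := 0) (b := t)
      (f := fun s : ℝ => Complex.exp (-a * s) • w s) (B' := fun s => c * (Real.exp (δ * s) * δ))
      (fun s hs => (hasDerivAt_cexp_neg_mul_smul (hw s hs.1)).continuousAt.continuousWithinAt)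
      (fun s hs => (hasDerivAt_cexp_neg_mul_smul (hw s hs.1)).hasDerivWithinAt) ?_
      (fun s => ((hasDerivAt_const_mul δ).exp).const_mul c) (fun s hs => ?_) ⟨ht, le_rfl⟩
    · simpa [c] using div_nonneg hK hδ.le
    · calc ‖Complex.exp (-a * s) • g s‖
          = Real.exp (-a.re * s) * ‖g s‖ := by rw [norm_smul, norm_cexp_neg_mul_ofReal]
        _ ≤ Real.exp (-a.re * s) * (K * Real.exp (-lam * s)) := by gcongr; exact hg s hs.1
        _ = K * Real.exp (δ * s) := by rw [mul_left_comm, exp_mul_exp]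
        _ ≤ c * δ * Real.exp (δ * s) := by gcongr
        _ = c * (Real.exp (δ * s) * δ) := by ring
  rw [norm_smul, norm_cexp_neg_mul_ofReal, ← exp_mul_exp, mul_left_comm] at fence
  exact le_of_mul_le_mul_left fence (Real.exp_pos _)

lemma exists_norm_le_exp_of_aeval_prod_eq_zero (f : E →L[ℂ] E) {lam : ℝ} (s : Multiset ℂ)
    (hs : ∀ a ∈ s, a.re < -lam) :
    ∃ c > (0 : ℝ), ∀ w : ℝ → E, (∀ t, 0 ≤ t → HasDerivAt w (f (w t)) t) →
      (∀ t, 0 ≤ t →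
        Polynomial.aeval f (s.map fun a => Polynomial.X - Polynomial.C a).prod (w t) = 0) →
      ∀ t, 0 ≤ t → ‖w t‖ ≤ c * Real.exp (-lam * t) * ‖w 0‖ := by
  induction s using Multiset.induction_on with
  | empty =>
    refine ⟨1, one_pos, fun w _ hzero t ht => ?_⟩
    have hwt : w t = 0 := by simpa using hzero t ht
    rw [hwt, norm_zero]
    positivity
  | cons a s ih =>
    obtain ⟨c, hc, decay⟩ := ih fun b hb => hs b (Multiset.mem_cons_of_mem hb)
    have ha : a.re < -lam := hs a (Multiset.mem_cons_self a s)
    set D : E →L[ℂ] E := f - algebraMap ℂ _ a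
    have hcD : 0 ≤ c * ‖D‖ / (-lam - a.re) := div_nonneg (by positivity) (sub_pos.2 ha).le
    refine ⟨1 + c * ‖D‖ / (-lam - a.re), by linarith, fun w hw hzero t ht => ?_⟩
    have hDw : ∀ t, 0 ≤ t → HasDerivAt (fun s => D (w s)) (f (D (w t))) t := fun t ht =>
      ((D.restrictScalars ℝ).hasFDerivAt.comp_hasDerivAt t (hw t ht)).congr_deriv
        (by simp [D, Algebra.algebraMap_eq_smul_one])
    have hDzero : ∀ t, 0 ≤ t →
        Polynomial.aeval f (s.map fun a => Polynomial.X - Polynomial.C a).prod (D (w t)) = 0 := by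
      intro t ht
      simpa [mul_comm (Polynomial.X - Polynomial.C a), D] using hzero t ht
    have hw' : ∀ t, 0 ≤ t → HasDerivAt w (a • w t + D (w t)) t := fun t ht =>
      (hw t ht).congr_deriv (by simp [D, Algebra.algebraMap_eq_smul_one])
    have hD : ∀ t, 0 ≤ t → ‖D (w t)‖ ≤ c * (‖D‖ * ‖w 0‖) * Real.exp (-lam * t) := by
      intro t ht
      calc ‖D (w t)‖ ≤ c * Real.exp (-lam * t) * ‖D (w 0)‖ := decay _ hDw hDzero t ht
        _ ≤ c * Real.exp (-lam * t) * (‖D‖ * ‖w 0‖) := by gcongr; exact D.le_opNorm _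
        _ = c * (‖D‖ * ‖w 0‖) * Real.exp (-lam * t) := by ring
    exact (norm_le_exp_of_hasDerivAt_smul_add ha hw' hD ht).trans_eq (by ring)

lemma exists_pos_forall_lt_neg {α : Type*} {s : Set α} (hs : s.Finite) {f : α → ℝ}
    (hf : ∀ a ∈ s, f a < 0) : ∃ ε > (0 : ℝ), ∀ a ∈ s, f a < -ε := by
  have near_zero : ∀ᶠ ε in nhdsWithin (0 : ℝ) (Set.Ioi 0), ∀ a ∈ s, f a < -ε :=
    hs.eventually_all.2 fun a ha =>
      mem_of_superset (Ioo_mem_nhdsGT (neg_pos.2 (hf a ha))) fun _ hε => lt_neg_of_lt_neg hε.2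
  exact (eventually_mem_nhdsWithin.and near_zero).exists

end ExponentialDecay

section EuclideanNorm

variable {ι κ : Type*} [Fintype ι] [Fintype κ]

lemma euclNorm_nonneg (v : ι → ℝ) : 0 ≤ euclNorm v :=
  Real.sqrt_nonneg _

lemma norm_toLp_ofReal (v : ι → ℝ) : ‖WithLp.toLp 2 fun i => (v i : ℂ)‖ = euclNorm v := by
  simp [EuclideanSpace.norm_eq, euclNorm]

lemma euclNorm_sumElim_sq (v : ι → ℝ) (w : κ → ℝ) :
    euclNorm (Sum.elim v w) ^ 2 = euclNorm v ^ 2 + euclNorm w ^ 2 := by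
  unfold euclNorm
  rw [Real.sq_sqrt (by positivity), Real.sq_sqrt (by positivity), Real.sq_sqrt (by positivity)]
  simp

lemma euclNorm_sumElim_le (v : ι → ℝ) (w : κ → ℝ) :
    euclNorm (Sum.elim v w) ≤ euclNorm v + euclNorm w := by
  have := euclNorm_sumElim_sq v w
  nlinarith [euclNorm_nonneg v, euclNorm_nonneg w]

lemma euclNorm_add_euclNorm_le (v : ι → ℝ) (w : κ → ℝ) :
    euclNorm v + euclNorm w ≤ 2 * euclNorm (Sum.elim v w) := by
  have := euclNorm_sumElim_sq v w
  nlinarith [euclNorm_nonneg (Sum.elim v w), sq_nonneg (euclNorm v - euclNorm w)]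

lemma frobNorm_eq_euclNorm_mvec {l : ℕ} (X : Matrix (Fin l) κ ℝ) :
    frobNorm X = euclNorm (mvec X) := by
  rw [frobNorm, Finset.sum_comm, euclNorm, Fintype.sum_prod_type]
  rfl

end EuclideanNorm

section Hurwitz

variable {N K ι : Type*} [Fintype N] [DecidableEq N] [Fintype K] [DecidableEq K] [Fintype ι]

lemma isHurwitz_iff_isRoot_charpoly_map {H : Matrix N N ℝ} :
    IsHurwitz H ↔ ∀ z, (H.charpoly.map Complex.ofRealHom).IsRoot z → z.re < 0 := by
  simp only [IsHurwitz, mem_spectrum_iff_isRoot_charpoly, ← charpoly_map]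
  rfl

lemma isHurwitz_fromBlocks_zero₁₂ {P : Matrix N N ℝ} {Q : Matrix K N ℝ} {R : Matrix K K ℝ} :
    IsHurwitz (fromBlocks P 0 Q R) ↔ IsHurwitz P ∧ IsHurwitz R := by
  simp only [isHurwitz_iff_isRoot_charpoly_map, charpoly_fromBlocks_zero₁₂, Polynomial.map_mul,
    Polynomial.root_mul, or_imp, forall_and]

lemma IsHurwitz.of_mul_eq_mul {G H W : Matrix N N ℝ} (hH : IsHurwitz H) (hW : IsUnit W)
    (h : W * G = H * W) : IsHurwitz G := by
  obtain ⟨U, rfl⟩ := hW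
  have hconj : U.val * G * U.val⁻¹ = H := by
    rw [h, ← coe_units_inv, Units.mul_inv_cancel_right]
  rwa [isHurwitz_iff_isRoot_charpoly_map, ← charpoly_units_conj U G, hconj,
    ← isHurwitz_iff_isRoot_charpoly_map]

lemma IsHurwitz.of_fromBlocks_add_fromRows_mul {P : Matrix N N ℝ} {Q : Matrix K N ℝ}
    {R : Matrix K K ℝ} {G : Matrix K ι ℝ} {V : Matrix ι (N ⊕ K) ℝ}
    (h : IsHurwitz (fromBlocks P 0 Q R + fromRows 0 G * V)) : IsHurwitz (R + G * V.toCols₂) := by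
  have hBlocks : fromBlocks P 0 Q R + fromRows 0 G * V =
      fromBlocks P 0 (Q + G * V.toCols₁) (R + G * V.toCols₂) := by
    conv_lhs => rw [← fromCols_toCols V, fromRows_mul_fromCols, fromBlocks_add]
    simp
  exact (isHurwitz_fromBlocks_zero₁₂.1 (hBlocks ▸ h)).2

lemma exists_norm_le_exp_of_spectrum_re_lt {H : Matrix N N ℂ} {lam : ℝ}
    (hH : ∀ z ∈ spectrum ℂ H, z.re < -lam) :
    ∃ c > (0 : ℝ), ∀ w : ℝ → EuclideanSpace ℂ N,
      (∀ t, 0 ≤ t → HasDerivAt w (toEuclideanCLM (𝕜 := ℂ) H (w t)) t) →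
      ∀ t, 0 ≤ t → ‖w t‖ ≤ c * Real.exp (-lam * t) * ‖w 0‖ := by
  obtain ⟨c, hc, decay⟩ := exists_norm_le_exp_of_aeval_prod_eq_zero
    (toEuclideanCLM (𝕜 := ℂ) H) H.charpoly.roots fun a ha =>
      hH a (mem_spectrum_iff_isRoot_charpoly.2 (Polynomial.isRoot_of_mem_roots ha))
  refine ⟨c, hc, fun w hw => decay w hw fun t _ => ?_⟩
  rw [← (IsAlgClosed.splits H.charpoly).eq_prod_roots_of_monic H.charpoly_monic,
    Polynomial.aeval_algHom_apply, aeval_self_charpoly, map_zero]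
  rfl

theorem IsHurwitz.exists_euclNorm_le_exp {H : Matrix N N ℝ} (hH : IsHurwitz H) :
    ∃ c > (0 : ℝ), ∃ lam > (0 : ℝ), ∀ z : ℝ → N → ℝ,
      (∀ t, 0 ≤ t → ∀ i, HasDerivAt (fun s => z s i) ((H *ᵥ z t) i) t) →
      ∀ t, 0 ≤ t → euclNorm (z t) ≤ c * Real.exp (-lam * t) * euclNorm (z 0) := by
  obtain ⟨lam, hlam, gap⟩ := exists_pos_forall_lt_neg (finite_spectrum _) hH
  obtain ⟨c, hc, decay⟩ := exists_norm_le_exp_of_spectrum_re_lt gap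
  refine ⟨c, hc, lam, hlam, fun z hz t ht => ?_⟩
  simp only [← norm_toLp_ofReal]
  refine decay (fun t => WithLp.toLp 2 fun i => (z t i : ℂ)) (fun t ht => ?_) t ht
  have hzc : HasDerivAt (fun s i => (z s i : ℂ)) (fun i => ((H *ᵥ z t) i : ℂ)) t :=
    hasDerivAt_pi.2 fun i => (hz t ht i).ofReal_comp
  refine ((PiLp.hasFDerivAt_toLp 2 _).comp_hasDerivAt t hzc).congr_deriv ?_
  ext i
  simp [mulVec, dotProduct]

end Hurwitz

section ClosedLoop

variable {N K ι o : Type*} [Fintype ι] [Fintype o]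

/-- State matrix, in the coordinates `(x, ξ)`, of the plant `x' = A x + B u`, `y = C x` in feedback
with the filter `ξ' = Φ ξ + G u + J y` through `u = V ξ`. -/
def closedLoop (A : Matrix N N ℝ) (B : Matrix N ι ℝ) (C : Matrix o N ℝ) (Φ : Matrix K K ℝ)
    (G : Matrix K ι ℝ) (J : Matrix K o ℝ) (V : Matrix ι K ℝ) : Matrix (N ⊕ K) (N ⊕ K) ℝ :=
  fromBlocks A (B * V) (J * C) (Φ + G * V)

variable [Fintype N] [DecidableEq N] [Fintype K] [DecidableEq K]

lemma isHurwitz_closedLoop_of_intertwining {A : Matrix N N ℝ} {B : Matrix N ι ℝ} {C : Matrix o N ℝ}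
    {L : Matrix N o ℝ} {Φ : Matrix K K ℝ} {G : Matrix K ι ℝ} {J : Matrix K o ℝ}
    {V : Matrix ι K ℝ} {P : Matrix N K ℝ} (hΦ : P * Φ = (A - L * C) * P) (hG : P * G = B)
    (hJ : P * J = L) (hObs : IsHurwitz (A - L * C))
    (hFilter : IsHurwitz (Φ + J * (C * P) + G * V)) : IsHurwitz (closedLoop A B C Φ G J V) := by
  have hTriangular :
      IsHurwitz (fromBlocks (A - L * C) 0 (J * C) (Φ + J * (C * P) + G * V)) :=
    isHurwitz_fromBlocks_zero₁₂.2 ⟨hObs, hFilter⟩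
  refine hTriangular.of_mul_eq_mul (W := fromBlocks 1 (-P) 0 1)
    (isUnit_fromBlocks_zero₂₁.2 ⟨isUnit_one, isUnit_one⟩) ?_
  rw [closedLoop, fromBlocks_multiply, fromBlocks_multiply]
  subst hG hJ
  congr 1
  · simp [Matrix.mul_assoc, sub_eq_add_neg]
  · simp [Matrix.mul_add, hΦ, Matrix.mul_assoc]
  · simp
  · simp only [Matrix.mul_neg, Matrix.mul_assoc, Matrix.zero_mul, Matrix.one_mul, Matrix.mul_one]
    abel

end ClosedLoop

section KreisselmeierFilter

variable {n m p : ℕ}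

lemma rowKron_mulVec_mvec {K : Type*} [Fintype K] (θ : K → ℝ) (S : Matrix (Fin n) (Fin n) ℝ)
    (X : Matrix (Fin n) K ℝ) : rowKron θ S *ᵥ mvec X = S *ᵥ X *ᵥ θ := by
  ext i
  rw [mulVec_mulVec]
  exact congrFun (kronecker_mulVec_vec S X (of fun (_ : Fin 1) j => θ j)) (0, i)

lemma mul_rowKron {K : Type*} (θ : K → ℝ) (R S : Matrix (Fin n) (Fin n) ℝ) :
    R * rowKron θ S = rowKron θ (R * S) := by
  ext i q
  simp [rowKron, mul_apply, Finset.mul_sum, mul_left_comm]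

lemma rowKron_mul_one_kronecker {K : Type*} [Fintype K] [DecidableEq K] (θ : K → ℝ)
    (S F : Matrix (Fin n) (Fin n) ℝ) :
    rowKron θ S * ((1 : Matrix K K ℝ) ⊗ₖ F) = rowKron θ (S * F) := by
  have hmul := mul_kronecker_mul (of fun (_ : Fin 1) j => θ j) (1 : Matrix K K ℝ) S F
  rw [Matrix.mul_one] at hmul
  rw [rowKron, rowKron, hmul]
  rfl

lemma regressor_mulVec_sumElim_mvec (X : Matrix (Fin n) (Fin p) ℝ) (Y : Matrix (Fin n) (Fin m) ℝ)
    (y : Fin p → ℝ) (u : Fin m → ℝ) :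
    regressor n y u *ᵥ Sum.elim (mvec X) (mvec Y) = X *ᵥ y + Y *ᵥ u := by
  rw [regressor, fromCols_mulVec_sumElim, rowKron_mulVec_mvec, rowKron_mulVec_mvec, one_mulVec,
    one_mulVec]

lemma mvec_regressor (y : Fin p → ℝ) (u : Fin m → ℝ) :
    mvec (regressor n y u) = Bxi n m p *ᵥ u + Lxi n m p *ᵥ y := by
  ext ⟨⟨a, b⟩ | ⟨a, b⟩, i⟩ <;>
    simp [mvec, regressor, rowKron, Lxi, Bxi, mulVec, dotProduct, one_apply, eq_comm]

lemma mvec_mul_add_regressor (F : Matrix (Fin n) (Fin n) ℝ) (M : Matrix (Fin n) (Kix n m p) ℝ)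
    (y : Fin p → ℝ) (u : Fin m → ℝ) :
    mvec (F * M + regressor n y u) = Fxi F *ᵥ mvec M + (Bxi n m p *ᵥ u + Lxi n m p *ᵥ y) := by
  rw [← mvec_regressor]
  exact congrArg (· + mvec (regressor n y u)) (vec_mul_eq_mulVec F M)

lemma rowKron_mulVec_Bxi_add_Lxi (X : Matrix (Fin n) (Fin p) ℝ) (Y : Matrix (Fin n) (Fin m) ℝ)
    (S : Matrix (Fin n) (Fin n) ℝ) (y : Fin p → ℝ) (u : Fin m → ℝ) :
    rowKron (Sum.elim (mvec X) (mvec Y)) S *ᵥ (Bxi n m p *ᵥ u + Lxi n m p *ᵥ y) =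
      S *ᵥ (X *ᵥ y + Y *ᵥ u) := by
  rw [← mvec_regressor, rowKron_mulVec_mvec, regressor_mulVec_sumElim_mvec]

lemma rowKron_mul_Lxi (X : Matrix (Fin n) (Fin p) ℝ) (Y : Matrix (Fin n) (Fin m) ℝ)
    (S : Matrix (Fin n) (Fin n) ℝ) :
    rowKron (Sum.elim (mvec X) (mvec Y)) S * Lxi n m p = S * X :=
  ext_iff_mulVec.2 fun y => by simpa using rowKron_mulVec_Bxi_add_Lxi X Y S y 0

lemma rowKron_mul_Bxi (X : Matrix (Fin n) (Fin p) ℝ) (Y : Matrix (Fin n) (Fin m) ℝ)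
    (S : Matrix (Fin n) (Fin n) ℝ) :
    rowKron (Sum.elim (mvec X) (mvec Y)) S * Bxi n m p = S * Y :=
  ext_iff_mulVec.2 fun u => by simpa using rowKron_mulVec_Bxi_add_Lxi X Y S 0 u

lemma isHurwitz_closedLoop_kreisselmeier {A F T : Matrix (Fin n) (Fin n) ℝ}
    {B : Matrix (Fin n) (Fin m) ℝ} {C : Matrix (Fin p) (Fin n) ℝ} {L : Matrix (Fin n) (Fin p) ℝ}
    {V : Matrix (Fin m) (Kix n m p × Fin n) ℝ} (hF : IsHurwitz F) (hT : IsUnit T)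
    (hFT : F * T = T * (A - L * C))
    (hV : IsHurwitz (Fxi F + Lxi n m p *
      (C * rowKron (Sum.elim (mvec (T * L)) (mvec (T * B))) T⁻¹) + Bxi n m p * V)) :
    IsHurwitz (closedLoop A B C (Fxi F) (Bxi n m p) (Lxi n m p) V) := by
  have hdet : IsUnit T.det := (isUnit_iff_isUnit_det T).1 hT
  have hTinv : T⁻¹ * F = (A - L * C) * T⁻¹ := by
    rw [← mul_nonsing_inv_cancel_right T F hdet, hFT, Matrix.mul_assoc,
      nonsing_inv_mul_cancel_left T _ hdet]
  refine isHurwitz_closedLoop_of_intertwining ?_ ?_ ?_ (hF.of_mul_eq_mul hT hFT.symm) hV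
  · rw [Fxi, rowKron_mul_one_kronecker, mul_rowKron, hTinv]
  · rw [rowKron_mul_Bxi, nonsing_inv_mul_cancel_left T _ hdet]
  · rw [rowKron_mul_Lxi, nonsing_inv_mul_cancel_left T _ hdet]

lemma closedLoop_mulVec_sumElim_mvec (A F : Matrix (Fin n) (Fin n) ℝ) (B : Matrix (Fin n) (Fin m) ℝ)
    (C : Matrix (Fin p) (Fin n) ℝ) (V : Matrix (Fin m) (Kix n m p × Fin n) ℝ)
    (x : Fin n → ℝ) (M : Matrix (Fin n) (Kix n m p) ℝ) :
    closedLoop A B C (Fxi F) (Bxi n m p) (Lxi n m p) V *ᵥ Sum.elim x (mvec M) =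
      Sum.elim (A *ᵥ x + B *ᵥ V *ᵥ mvec M)
        (mvec (F * M + regressor n (C *ᵥ x) (V *ᵥ mvec M))) := by
  rw [closedLoop, fromBlocks_mulVec, mvec_mul_add_regressor]
  simp [add_mulVec, add_comm, add_left_comm]

end KreisselmeierFilter

/-- Lemma 4 in the paper: the filter-based output-feedback controller
achieves global exponential stability of the closed loop. With
`A_e = [[Λ, 0], [L_ξ·C·T⁻¹·Γ, A_ξ]]`, `B_e = [0; B_ξ]` and a gain `K_e` making
`A_e + B_e·K_e` Hurwitz, the closed loop `x' = Ax + Bu`, `y = Cx`,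
`M' = FM + [yᵀ ⊗ Iₙ, uᵀ ⊗ Iₙ]`, `u = K_e·[0ₙ; vec(M)]` satisfies
`‖x(t)‖ + ‖M(t)‖_F ≤ c·e^{−λt}·(‖x(0)‖ + ‖M(0)‖_F)` for some `c, λ > 0`
uniform over all initial conditions. -/
theorem stmt12 {n m p : ℕ}
    (A : Matrix (Fin n) (Fin n) ℝ) (B : Matrix (Fin n) (Fin m) ℝ)
    (C : Matrix (Fin p) (Fin n) ℝ)
    (F : Matrix (Fin n) (Fin n) ℝ) (hHur : IsHurwitz F)
    (L : Matrix (Fin n) (Fin p) ℝ)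
    (T : Matrix (Fin n) (Fin n) ℝ) (hT : IsUnit T)
    (hFT : F * T = T * (A - L * C))
    (θ : Kix n m p → ℝ) (hθ : θ = Sum.elim (mvec (T * L)) (mvec (T * B)))
    (Pim : Matrix (Fin n) (Kix n m p × Fin n) ℝ) (hPim : Pim = rowKron θ T⁻¹)
    (Cξ : Matrix (Fin p) (Kix n m p × Fin n) ℝ) (hCξ : Cξ = C * Pim)
    (Aξ : Matrix (Kix n m p × Fin n) (Kix n m p × Fin n) ℝ)
    (hAξ : Aξ = Fxi F + Lxi n m p * Cξ)
    (Lam : Matrix (Fin n) (Fin n) ℝ) (hLam : IsHurwitz Lam)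
    (Γ : Matrix (Fin n) (Fin n) ℝ)
    (Ae : Matrix (Fin n ⊕ Kix n m p × Fin n) (Fin n ⊕ Kix n m p × Fin n) ℝ)
    (hAe : Ae = Matrix.fromBlocks Lam 0 (Lxi n m p * C * T⁻¹ * Γ) Aξ)
    (Be : Matrix (Fin n ⊕ Kix n m p × Fin n) (Fin m) ℝ)
    (hBe : Be = Matrix.fromRows (0 : Matrix (Fin n) (Fin m) ℝ) (Bxi n m p))
    (Ke : Matrix (Fin m) (Fin n ⊕ Kix n m p × Fin n) ℝ)
    (hKe : IsHurwitz (Ae + Be * Ke)) :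
    ∃ c > (0 : ℝ), ∃ lam > (0 : ℝ),
      ∀ (x : ℝ → Fin n → ℝ) (M : ℝ → Matrix (Fin n) (Kix n m p) ℝ)
        (u : ℝ → Fin m → ℝ),
        (∀ t, u t = Ke.mulVec (Sum.elim (0 : Fin n → ℝ) (mvec (M t)))) →
        (∀ t, 0 ≤ t → ∀ i, HasDerivAt (fun s => x s i)
            ((A.mulVec (x t) + B.mulVec (u t)) i) t) →
        (∀ t, 0 ≤ t → ∀ i j, HasDerivAt (fun s => M s i j)
            ((F * M t + regressor n (C.mulVec (x t)) (u t)) i j) t) →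
        ∀ t, 0 ≤ t →
          euclNorm (x t) + frobNorm (M t) ≤
            c * Real.exp (-lam * t) * (euclNorm (x 0) + frobNorm (M 0)) := by
  subst hθ hPim hCξ hAξ hAe hBe
  have hLoop : IsHurwitz (closedLoop A B C (Fxi F) (Bxi n m p) (Lxi n m p) Ke.toCols₂) :=
    isHurwitz_closedLoop_kreisselmeier hHur hT hFT hKe.of_fromBlocks_add_fromRows_mul
  obtain ⟨c, hc, lam, hlam, decay⟩ := hLoop.exists_euclNorm_le_exp
  refine ⟨2 * c, by positivity, lam, hlam, fun x M u hu hx hM t ht => ?_⟩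
  have hu' (t : ℝ) : u t = Ke.toCols₂ *ᵥ mvec (M t) := by
    rw [hu, ← fromCols_toCols Ke, fromCols_mulVec_sumElim]
    simp
  have hz := decay (fun t => Sum.elim (x t) (mvec (M t))) fun t ht => by
    rw [closedLoop_mulVec_sumElim_mvec, ← hu']
    rintro (i | ⟨j, i⟩)
    exacts [hx t ht i, hM t ht i j]
  simp only [frobNorm_eq_euclNorm_mvec]
  calc euclNorm (x t) + euclNorm (mvec (M t))
      ≤ 2 * euclNorm (Sum.elim (x t) (mvec (M t))) := euclNorm_add_euclNorm_le _ _
    _ ≤ 2 * (c * Real.exp (-lam * t) * (euclNorm (x 0) + euclNorm (mvec (M 0)))) := by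
      gcongr
      exact (hz t ht).trans (by gcongr; exact euclNorm_sumElim_le _ _)
    _ = 2 * c * Real.exp (-lam * t) * (euclNorm (x 0) + euclNorm (mvec (M 0))) := by ring
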